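/- Let n = 1 and let Q and Q′ be real normal defining functions of dimension 1, with M′ of finite type at 0 (Q′(z,χ,0) ≢ 0 near 0). Let ℋ = (f,g,f̃,g̃) be an HSPM sending (ℳ,0) into (ℳ′,0) which is totally Segre nondegenerate at 0, i.e. neither z ↦ ∂f/∂z(z,0) nor χ ↦ ∂f̃/∂χ(χ,0) vanishes identically near 0. Then z ↦ f(z,0) and χ ↦ f̃(χ,0) are not identically zero and have the same order of vanishing at 0; that is, if the lowest order nonzero Taylor term of f(z,0) at 0 is c·z^r with c ≠ 0, then the lowest order nonzero Taylor term of f̃(χ,0) at 0 is c̃·χ^r for some c̃ ≠ 0. If in addition Q′ = Q, then ∂f/∂z(0,0) ≠ 0, ∂f̃/∂χ(0,0) ≠ 0 and ∂g/∂w(0,0) ≠ 0; in particular the Jacobian matrices of (f,g) and of (f̃,g̃) at the origin of ℂ² are invertible, so ℋ is a biholomorphism near 0. -/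

import Mathlib

open Filter Topology Complex

namespace HSPMpaper

variable {n : ℕ}

/-- Partial derivative of `F` in the `i`-th coordinate direction. -/
noncomputable def pd (i : Fin n) (F : (Fin n → ℂ) → ℂ) : (Fin n → ℂ) → ℂ :=
  fun z => fderiv ℂ F z (Pi.single i 1)

/-- Iterated partial derivative `∂^α` for a multi-index `α`. -/
noncomputable def mpd (α : Fin n → ℕ) (F : (Fin n → ℂ) → ℂ) : (Fin n → ℂ) → ℂ :=
  ((List.ofFn fun i : Fin n => (pd i)^[α i]).foldr (· ∘ ·) id) F

/-- Componentwise complex conjugation on `ℂⁿ`. -/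
def conjV (z : Fin n → ℂ) : Fin n → ℂ := fun i => starRingEnd ℂ (z i)

/-- The conjugate defining function `Q̄(χ,z,τ) = conj (Q (conj χ) (conj z) (conj τ))`. -/
def QBar (Q : (Fin n → ℂ) → (Fin n → ℂ) → ℂ → ℂ) : (Fin n → ℂ) → (Fin n → ℂ) → ℂ → ℂ :=
  fun χ z τ => starRingEnd ℂ (Q (conjV χ) (conjV z) (starRingEnd ℂ τ))

/-- `Q` is a normal defining function (of dimension `n`): holomorphic near the origin of
`ℂⁿ × ℂⁿ × ℂ` and satisfying `Q(0,χ,τ) = τ` and `Q(z,0,τ) = τ` near `0`. -/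
def IsNormalDF (Q : (Fin n → ℂ) → (Fin n → ℂ) → ℂ → ℂ) : Prop :=
  (∀ᶠ p in 𝓝 (0 : (Fin n → ℂ) × (Fin n → ℂ) × ℂ),
      AnalyticAt ℂ (fun q : (Fin n → ℂ) × (Fin n → ℂ) × ℂ => Q q.1 q.2.1 q.2.2) p) ∧
  (∀ᶠ p in 𝓝 (0 : (Fin n → ℂ) × (Fin n → ℂ) × ℂ),
      Q 0 p.2.1 p.2.2 = p.2.2 ∧ Q p.1 0 p.2.2 = p.2.2)

/-- `Q` is a real normal defining function: normal and `Q(z,χ,Q̄(χ,z,w)) = w` near `0`. -/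
def IsRealNormalDF (Q : (Fin n → ℂ) → (Fin n → ℂ) → ℂ → ℂ) : Prop :=
  IsNormalDF Q ∧
  ∀ᶠ p in 𝓝 (0 : (Fin n → ℂ) × (Fin n → ℂ) × ℂ),
    Q p.1 p.2.1 (QBar Q p.2.1 p.1 p.2.2) = p.2.2

/-- `(f,g,f̃,g̃)` is a holomorphic Segre preserving map sending `(ℳ,0)` into `(ℳ',0)`. -/
def IsHSPM (Q Q' : (Fin n → ℂ) → (Fin n → ℂ) → ℂ → ℂ)
    (f : (Fin n → ℂ) → ℂ → Fin n → ℂ) (g : (Fin n → ℂ) → ℂ → ℂ)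
    (ft : (Fin n → ℂ) → ℂ → Fin n → ℂ) (gt : (Fin n → ℂ) → ℂ → ℂ) : Prop :=
  (∀ᶠ p in 𝓝 (0 : (Fin n → ℂ) × ℂ), AnalyticAt ℂ (fun q : (Fin n → ℂ) × ℂ => f q.1 q.2) p) ∧
  (∀ᶠ p in 𝓝 (0 : (Fin n → ℂ) × ℂ), AnalyticAt ℂ (fun q : (Fin n → ℂ) × ℂ => g q.1 q.2) p) ∧
  (∀ᶠ p in 𝓝 (0 : (Fin n → ℂ) × ℂ), AnalyticAt ℂ (fun q : (Fin n → ℂ) × ℂ => ft q.1 q.2) p) ∧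
  (∀ᶠ p in 𝓝 (0 : (Fin n → ℂ) × ℂ), AnalyticAt ℂ (fun q : (Fin n → ℂ) × ℂ => gt q.1 q.2) p) ∧
  f 0 0 = 0 ∧ g 0 0 = 0 ∧ ft 0 0 = 0 ∧ gt 0 0 = 0 ∧
  ∀ᶠ p in 𝓝 (0 : (Fin n → ℂ) × (Fin n → ℂ) × ℂ),
    g p.1 (Q p.1 p.2.1 p.2.2) =
      Q' (f p.1 (Q p.1 p.2.1 p.2.2)) (ft p.2.1 p.2.2) (gt p.2.1 p.2.2)

/-- `M` is of finite type at `0`: `(z,χ) ↦ Q(z,χ,0)` does not vanish identically near `0`. -/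
def FiniteType (Q : (Fin n → ℂ) → (Fin n → ℂ) → ℂ → ℂ) : Prop :=
  ¬ ∀ᶠ p in 𝓝 (0 : (Fin n → ℂ) × (Fin n → ℂ)), Q p.1 p.2 0 = 0

/-- Jacobian matrix of `z ↦ f(z,0)` at `z`. -/
noncomputable def jacz (f : (Fin n → ℂ) → ℂ → Fin n → ℂ) (z : Fin n → ℂ) :
    Matrix (Fin n) (Fin n) ℂ :=
  Matrix.of fun i j => pd j (fun z' => f z' 0 i) z

/-- `ℋ` is Segre transversal to `ℳ'` at `0`: `∂g/∂w(0,0) ≠ 0`. -/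
noncomputable def SegreTransversal (g : (Fin n → ℂ) → ℂ → ℂ) : Prop :=
  deriv (fun w => g 0 w) 0 ≠ 0

/-- `ℋ` is totally Segre nondegenerate at `0`. -/
def TotallySegreNondeg (f ft : (Fin n → ℂ) → ℂ → Fin n → ℂ) : Prop :=
  (¬ ∀ᶠ z in 𝓝 (0 : Fin n → ℂ), (jacz f z).det = 0) ∧
  (¬ ∀ᶠ χ in 𝓝 (0 : Fin n → ℂ), (jacz ft χ).det = 0)

/-- `ℋ` is transversally null: `g ≡ 0` and `g̃ ≡ 0` near `0`. -/
def TransversallyNull (g gt : (Fin n → ℂ) → ℂ → ℂ) : Prop :=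
  (∀ᶠ p in 𝓝 (0 : (Fin n → ℂ) × ℂ), g p.1 p.2 = 0) ∧
  (∀ᶠ p in 𝓝 (0 : (Fin n → ℂ) × ℂ), gt p.1 p.2 = 0)

/-- The `k`-th coordinate direction in `ℂⁿ × ℂ`. -/
noncomputable def dirCT (n : ℕ) (k : Fin (n + 1)) : (Fin n → ℂ) × ℂ :=
  if h : (k : ℕ) < n then (Pi.single ⟨k, h⟩ 1, 0) else (0, 1)

/-- `M` is holomorphically nondegenerate at `0`: for some `K`, the map
`(χ,τ) ↦ (∂_z^α Q(0,χ,τ))_{|α| ≤ K}` has generic rank `n+1`. -/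
def HolNondeg (Q : (Fin n → ℂ) → (Fin n → ℂ) → ℂ → ℂ) : Prop :=
  ∃ K : ℕ, ∃ A : Fin (n + 1) → Fin n → ℕ, (∀ j, (∑ i, A j i) ≤ K) ∧
    ¬ ∀ᶠ p in 𝓝 (0 : (Fin n → ℂ) × ℂ),
      (Matrix.of fun j k : Fin (n + 1) =>
        fderiv ℂ (fun q : (Fin n → ℂ) × ℂ => mpd (A j) (fun z => Q z q.1 q.2) 0) p
          (dirCT n k)).det = 0

/-- `M` is of class `𝒞` at `0`: for some `K`, the map
`χ ↦ (∂_z^α Q(0,χ,0))_{|α| ≤ K}` has generic rank `n`. -/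
def ClassC (Q : (Fin n → ℂ) → (Fin n → ℂ) → ℂ → ℂ) : Prop :=
  ∃ K : ℕ, ∃ A : Fin n → Fin n → ℕ, (∀ j, (∑ i, A j i) ≤ K) ∧
    ¬ ∀ᶠ χ in 𝓝 (0 : Fin n → ℂ),
      (Matrix.of fun j k : Fin n =>
        pd k (fun χ' => mpd (A j) (fun z => Q z χ' 0) 0) χ).det = 0

/-- `M` is finitely nondegenerate at `0`: for some `K`, the vectors
`∂_χ ∂_z^α Q(0,0,0)`, `|α| ≤ K`, span `ℂⁿ`. -/
def FinNondeg (Q : (Fin n → ℂ) → (Fin n → ℂ) → ℂ → ℂ) : Prop :=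
  ∃ K : ℕ, Submodule.span ℂ
    {v : Fin n → ℂ | ∃ α : Fin n → ℕ, (∑ i, α i) ≤ K ∧
      v = fun i => pd i (fun χ => mpd α (fun z => Q z χ 0) 0) 0} = ⊤

/-- Full Jacobian matrix of `(z,w) ↦ (f(z,w), g(z,w))` at `p ∈ ℂⁿ × ℂ`. -/
noncomputable def jacFull (f : (Fin n → ℂ) → ℂ → Fin n → ℂ) (g : (Fin n → ℂ) → ℂ → ℂ)
    (p : (Fin n → ℂ) × ℂ) : Matrix (Fin (n + 1)) (Fin (n + 1)) ℂ :=
  Matrix.of fun i k =>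
    fderiv ℂ (fun q : (Fin n → ℂ) × ℂ => (Fin.snoc (f q.1 q.2) (g q.1 q.2) : Fin (n + 1) → ℂ) i) p (dirCT n k)

/-- The degree-`d` homogeneous term of the Taylor series of `φ` at `0`. -/
noncomputable def homogTerm (d : ℕ) (φ : (Fin n → ℂ) → ℂ) : (Fin n → ℂ) → ℂ :=
  fun z => iteratedFDeriv ℂ d φ 0 (fun _ => z) / (d.factorial : ℂ)

/-- The order of vanishing of `φ` at `0`. -/
noncomputable def vanishOrder (φ : (Fin n → ℂ) → ℂ) : ℕ :=
  sInf {d | homogTerm d φ ≠ 0}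

/-!
Order analytic germs `F (z, χ) = χ ^ m * B (z, χ)` lexicographically: first by the exponent `m` of
`χ`, then by the order `l` of `B (z, 0)`. These pairs add under multiplication and transform simply
under composition. Write `q = Q (·, 0)`, `q' = Q' (·, 0)`, and let `r`, `s` be the orders of
`f (z, 0)`, `f̃ (χ, 0)`. Normality gives `g (z, 0) = 0` and `g̃ (χ, 0) = 0`, so the mapping equation
restricts to `g (z, q) = q' (f (z, q), f̃ (χ, 0))`.

If `g̃_τ (χ, 0) = 0`, then differentiating the mapping equation at `τ = 0` along the directions in
`(χ, τ)` in which `Q` is constant forces `f̃_χ (χ, 0) = 0`, because `q'` is not identically zero.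
Hence `g̃`, and by reality also `g`, vanishes to exactly first order in its transversal variable.
Comparing orders in the restricted equation, `q` has order `(s * m', l)` with `l + c = r * l'`,
where `q'` has order `(m', l')` and `g` has order `(1, c)`. The conjugate equation exchanges `r` and
`s` while conjugation preserves the orders of `q` and `q'`, so `s * m' = r * m'` and `r = s`. If
`Q' = Q`, then `r * m' = m'` gives `r = 1`, whence `l + c = l` and `c = 0`.
-/

section Division

variable {𝕜 E F : Type*} [NontriviallyNormedField 𝕜] [NormedAddCommGroup E] [NormedSpace 𝕜 E]
  [NormedAddCommGroup F] [NormedSpace 𝕜 F]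

/-- The formal power series of `(f (x, w) - f (x, 0)) / w`, where `p` is the power series of `f`:
in `p (n + 1)`, replace the arguments `(x, w)` by `(x, 0)` one at a time. -/
noncomputable def sndQuotientSeries (p : FormalMultilinearSeries 𝕜 (E × 𝕜) F) :
    FormalMultilinearSeries 𝕜 (E × 𝕜) F :=
  fun n => ∑ j : Fin (n + 1),
    ((p (n + 1)).curryMid j (0, 1)).compContinuousLinearMap fun i =>
      if i.castSucc < j then .id 𝕜 (E × 𝕜)
      else (ContinuousLinearMap.inl 𝕜 E 𝕜).comp (ContinuousLinearMap.fst 𝕜 E 𝕜)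

theorem norm_sndQuotientSeries_le (p : FormalMultilinearSeries 𝕜 (E × 𝕜) F) (n : ℕ) :
    ‖sndQuotientSeries p n‖ ≤ (n + 1) * ‖p (n + 1)‖ := by
  have hproj : ‖(ContinuousLinearMap.inl 𝕜 E 𝕜).comp (ContinuousLinearMap.fst 𝕜 E 𝕜)‖ ≤ 1 :=
    ContinuousLinearMap.opNorm_le_bound _ zero_le_one fun v => by simp [Prod.norm_def]
  have hterm (j : Fin (n + 1)) : ‖((p (n + 1)).curryMid j (0, 1)).compContinuousLinearMap fun i =>
      if i.castSucc < j then .id 𝕜 (E × 𝕜)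
      else (ContinuousLinearMap.inl 𝕜 E 𝕜).comp (ContinuousLinearMap.fst 𝕜 E 𝕜)‖ ≤
        ‖p (n + 1)‖ := by
    refine (ContinuousMultilinearMap.norm_compContinuousLinearMap_le _ _).trans ?_
    refine (mul_le_of_le_one_right (norm_nonneg _) ?_).trans ?_
    rotate_left
    · simpa using ((p (n + 1)).curryMid j).le_opNorm (0, 1)
    · refine Finset.prod_le_one (fun _ _ => norm_nonneg _) fun i _ => ?_
      split_ifs
      exacts [ContinuousLinearMap.norm_id_le, hproj]
  simpa [sndQuotientSeries] using norm_sum_le_of_le Finset.univ fun j _ => hterm j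

theorem snd_smul_sndQuotientSeries_apply (p : FormalMultilinearSeries 𝕜 (E × 𝕜) F) (n : ℕ)
    (y : E × 𝕜) :
    y.2 • sndQuotientSeries p n (fun _ => y) =
      p (n + 1) (fun _ => y) - p (n + 1) (fun _ => (y.1, 0)) := by
  have htelescope := (p (n + 1)).toMultilinearMap.map_sub_map_piecewise (fun _ => y)
    (fun _ => (y.1, 0)) Finset.univ
  simp only [Finset.piecewise_univ, ContinuousMultilinearMap.coe_coe] at htelescope
  rw [htelescope, sndQuotientSeries, sum_apply, Finset.smul_sum]
  refine Finset.sum_congr rfl fun j _ => ?_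
  rw [ContinuousMultilinearMap.compContinuousLinearMap_apply, ← smul_apply,
    ← ContinuousLinearMap.map_smul, ContinuousMultilinearMap.curryMid_apply]
  congr 1
  refine Fin.insertNth_eq_iff.2 ⟨?_, ?_⟩
  · simp [Prod.ext_iff]
  · ext1 i
    rcases lt_or_ge i.castSucc j with hij | hij
    · simp [Fin.removeNth, Fin.succAbove_of_castSucc_lt _ _ hij, hij]
    · have := Fin.le_castSucc_iff.1 hij
      simp [Fin.removeNth, Fin.succAbove_of_le_castSucc _ _ hij, hij.not_gt, this.ne, this.not_gt]

theorem radius_sndQuotientSeries_pos {p : FormalMultilinearSeries 𝕜 (E × 𝕜) F}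
    (hp : 0 < p.radius) : 0 < (sndQuotientSeries p).radius := by
  obtain ⟨r, hr0, hrp⟩ := ENNReal.lt_iff_exists_nnreal_btwn.1 hp
  obtain ⟨a, ⟨ha0, ha1⟩, C, -, hbound⟩ := p.norm_mul_pow_le_mul_pow_of_lt_radius hrp
  refine hr0.trans_le ((sndQuotientSeries p).le_radius_of_summable ?_)
  have hr : (0 : ℝ) < r := mod_cast hr0
  have hsum : Summable fun n : ℕ => C / r * ((n + 1 : ℕ) * a ^ (n + 1)) :=
    ((summable_nat_add_iff (f := fun n : ℕ => (n : ℝ) * a ^ n) 1).2 (by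
      simpa using summable_pow_mul_geometric_of_norm_lt_one 1
        (show ‖a‖ < 1 by rwa [Real.norm_of_nonneg ha0.le]))).mul_left _
  refine hsum.of_nonneg_of_le (fun n => by positivity) fun n => ?_
  calc ‖sndQuotientSeries p n‖ * (r : ℝ) ^ n
      ≤ (n + 1) * ‖p (n + 1)‖ * (r : ℝ) ^ n := by gcongr; exact norm_sndQuotientSeries_le p n
    _ = (n + 1) / r * (‖p (n + 1)‖ * (r : ℝ) ^ (n + 1)) := by rw [pow_succ]; field_simp
    _ ≤ (n + 1) / r * (C * a ^ (n + 1)) :=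
        mul_le_mul_of_nonneg_left (hbound (n + 1)) (by positivity)
    _ = C / r * ((n + 1 : ℕ) * a ^ (n + 1)) := by push_cast; ring

theorem exists_analyticAt_eq_add_snd_smul [CompleteSpace F] {f : E × 𝕜 → F}
    (hf : AnalyticAt 𝕜 f 0) :
    ∃ h : E × 𝕜 → F, AnalyticAt 𝕜 h 0 ∧ ∀ᶠ p in 𝓝 0, f p = f (p.1, 0) + p.2 • h p := by
  obtain ⟨p, hp⟩ := hf
  have hq : HasFPowerSeriesAt (sndQuotientSeries p).sum (sndQuotientSeries p) 0 :=
    ((sndQuotientSeries p).hasFPowerSeriesOnBall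
      (radius_sndQuotientSeries_pos hp.radius_pos)).hasFPowerSeriesAt
  refine ⟨_, hq.analyticAt, ?_⟩
  have hfst : Tendsto (fun y : E × 𝕜 => (y.1, (0 : 𝕜))) (𝓝 0) (𝓝 0) :=
    Continuous.tendsto' (by fun_prop) _ _ rfl
  filter_upwards [hp.eventually_hasSum, hfst.eventually hp.eventually_hasSum,
    hq.eventually_hasSum] with y hy hy' hqy
  rw [zero_add] at hy hy' hqy
  have hsub := (hasSum_nat_add_iff' 1).2 (hy.sub hy')
  simp only [← snd_smul_sndQuotientSeries_apply] at hsub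
  have hzero : p 0 (fun _ => y) = p 0 (fun _ => (y.1, 0)) := congrArg (p 0) (Subsingleton.elim _ _)
  have := hsub.unique (hqy.const_smul y.2)
  simp only [Finset.sum_range_one, hzero, sub_self, sub_zero] at this
  rw [← this, add_sub_cancel]

end Division

section Flatness

variable {𝕜 E F : Type*} [NontriviallyNormedField 𝕜] [NormedAddCommGroup E] [NormedSpace 𝕜 E]
  [NormedAddCommGroup F] [NormedSpace 𝕜 F]

theorem eventually_eq_zero_of_forall_isBigO_norm_pow {f : E → F} {x : E} (hf : AnalyticAt 𝕜 f x)
    (hflat : ∀ n : ℕ, (fun y => f (x + y)) =O[𝓝 0] fun y => ‖y‖ ^ n) :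
    ∀ᶠ y in 𝓝 x, f y = 0 := by
  obtain ⟨p, hp⟩ := hf
  have hp0 (n : ℕ) : ∀ y : E, p n (fun _ => y) = 0 := by
    induction n using Nat.strong_induction_on with
    | _ n ih =>
      have hpartial : p.partialSum (n + 1) = fun y => p n fun _ => y :=
        funext fun y => Finset.sum_eq_single _
          (fun k hk hkn => ih k ((Finset.mem_range_succ_iff.1 hk).lt_of_ne hkn) y) (by simp)
      have hsub := (hflat (n + 1)).sub (hp.isBigO_sub_partialSum_pow (n + 1))
      simp only [hpartial, sub_sub_cancel] at hsub
      exact hsub.continuousMultilinearMap_apply_eq_zero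
  filter_upwards [hp.eventually_hasSum_sub] with y hy
  simpa only [hp0] using hy.unique (hasSum_zero.congr_fun fun n => (hp0 n _))

end Flatness

section LexOrder

theorem tendsto_of_continuousAt {X Y : Type*} [TopologicalSpace X] [TopologicalSpace Y] {f : X → Y}
    {x : X} {y : Y} (hf : ContinuousAt f x) (hy : f x = y) : Tendsto f (𝓝 x) (𝓝 y) :=
  hy ▸ hf

theorem eventually_prodMk_zero {X Y : Type*} [TopologicalSpace X] [TopologicalSpace Y] [Zero X]
    [Zero Y] {P : X × Y → Prop} (h : ∀ᶠ p in 𝓝 (0 : X × Y), P p) : ∀ᶠ x in 𝓝 (0 : X), P (x, 0) :=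
  (Continuous.tendsto' (by fun_prop : Continuous fun x : X => (x, (0 : Y))) 0 0 rfl).eventually h

variable {𝕜 : Type*} [NontriviallyNormedField 𝕜]

theorem analyticAt_prodMk_zero {E F G : Type*} [NormedAddCommGroup E] [NormedSpace 𝕜 E]
    [NormedAddCommGroup F] [NormedSpace 𝕜 F] [NormedAddCommGroup G] [NormedSpace 𝕜 G]
    {f : E × F → G} (hf : AnalyticAt 𝕜 f 0) : AnalyticAt 𝕜 (fun x => f (x, 0)) 0 :=
  hf.fun_comp_of_eq (g := f) (f := fun x => (x, 0)) (by fun_prop) rfl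

theorem fderiv_comp_prodMk_zero {E F G : Type*} [NormedAddCommGroup E] [NormedSpace 𝕜 E]
    [NormedAddCommGroup F] [NormedSpace 𝕜 F] [NormedAddCommGroup G] [NormedSpace 𝕜 G]
    {f : E × F → G} {x : E} (hf : DifferentiableAt 𝕜 f (x, 0)) (v : E) :
    fderiv 𝕜 (fun y => f (y, 0)) x v = fderiv 𝕜 f (x, 0) (v, 0) := by
  have := HasFDerivAt.comp x (g := f) (f := fun y => (y, 0)) hf.hasFDerivAt
    (hasFDerivAt_prodMk_left x 0)
  exact congrArg (fun L => L v) this.fderiv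

theorem analyticAt_clm_apply {E F G : Type*} [NormedAddCommGroup E] [NormedSpace 𝕜 E]
    [NormedAddCommGroup F] [NormedSpace 𝕜 F] [NormedAddCommGroup G] [NormedSpace 𝕜 G]
    {L : E → F →L[𝕜] G} {v : E → F} {x : E} (hL : AnalyticAt 𝕜 L x) (hv : AnalyticAt 𝕜 v x) :
    AnalyticAt 𝕜 (fun y => L y (v y)) x :=
  ((ContinuousLinearMap.id 𝕜 (F →L[𝕜] G)).analyticAt_bilinear _).fun_comp (hL.prod hv)

/-- `F (x, w)` has lexicographic order `(m, l)` at the origin: `F = w ^ m * B` for an analytic germ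
`B` such that `B (x, 0)` vanishes to order exactly `l`. -/
def HasLexOrder (F : 𝕜 × 𝕜 → 𝕜) (m l : ℕ) : Prop :=
  ∃ B : 𝕜 × 𝕜 → 𝕜, AnalyticAt 𝕜 B 0 ∧ (∀ᶠ p in 𝓝 0, F p = p.2 ^ m * B p) ∧
    analyticOrderAt (fun x => B (x, 0)) 0 = l

variable {F G : 𝕜 × 𝕜 → 𝕜} {m l m' l' : ℕ}

theorem HasLexOrder.congr (hF : HasLexOrder F m l) (hFG : ∀ᶠ p in 𝓝 0, F p = G p) :
    HasLexOrder G m l := by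
  obtain ⟨B, hB, hFB, hl⟩ := hF
  refine ⟨B, hB, ?_, hl⟩
  filter_upwards [hFB, hFG] with p hp hp'
  rw [← hp', hp]

theorem HasLexOrder.mul (hF : HasLexOrder F m l) (hG : HasLexOrder G m' l') :
    HasLexOrder (fun p => F p * G p) (m + m') (l + l') := by
  obtain ⟨A, hA, hFA, hl⟩ := hF
  obtain ⟨B, hB, hGB, hl'⟩ := hG
  refine ⟨fun p => A p * B p, hA.fun_mul hB, ?_, ?_⟩
  · filter_upwards [hFA, hGB] with p hp hp'
    rw [hp, hp']
    ring
  · have := analyticOrderAt_mul (analyticAt_prodMk_zero hA) (analyticAt_prodMk_zero hB)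
    rw [hl, hl'] at this
    exact_mod_cast this

theorem HasLexOrder.comp {a b : 𝕜 × 𝕜 → 𝕜} {r s k : ℕ} (hF : HasLexOrder F m l)
    (ha : AnalyticAt 𝕜 a 0) (ha0 : a 0 = 0) (har : analyticOrderAt (fun x => a (x, 0)) 0 = r)
    (hb : HasLexOrder b s k) (hs : s ≠ 0) :
    HasLexOrder (fun p => F (a p, b p)) (s * m) (m * k + l * r) := by
  obtain ⟨B, hB, hFB, hl⟩ := hF
  obtain ⟨C, hC, hbC, hk⟩ := hb
  have hab : AnalyticAt 𝕜 (fun p => (a p, p.2 ^ s * C p)) 0 :=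
    ha.prod ((analyticAt_snd.fun_pow s).fun_mul hC)
  have hab0 : (a 0, (0 : 𝕜 × 𝕜).2 ^ s * C 0) = 0 := by simp [ha0, hs]
  refine ⟨fun p => C p ^ m * B (a p, p.2 ^ s * C p),
    (hC.fun_pow m).fun_mul (hB.fun_comp_of_eq hab hab0), ?_, ?_⟩
  · have hab_tendsto := tendsto_of_continuousAt hab.continuousAt hab0
    filter_upwards [hbC, hab_tendsto.eventually hFB] with p hbp hp
    rw [hbp, hp]
    ring
  · have hBx : AnalyticAt 𝕜 (fun x => B (x, 0)) (a (0, 0)) :=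
      ha0.symm ▸ analyticAt_prodMk_zero hB
    have hBa := hBx.analyticOrderAt_comp (g := fun x => a (x, 0)) (analyticAt_prodMk_zero ha)
    have ha00 : a (0, 0) = 0 := ha0
    simp only [ha00, sub_zero, hl, har, Function.comp_def] at hBa
    have hBa' : AnalyticAt 𝕜 (fun x => B (a (x, 0), 0)) 0 :=
      hBx.fun_comp_of_eq (analyticAt_prodMk_zero ha) rfl
    calc analyticOrderAt (fun x => C (x, 0) ^ m * B (a (x, 0), (0 : 𝕜) ^ s * C (x, 0))) 0
        = analyticOrderAt ((fun x => C (x, 0)) ^ m * fun x => B (a (x, 0), 0)) 0 := by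
          simp [Pi.mul_def, Pi.pow_def, hs]
      _ = (m * k + l * r : ℕ) := by
          rw [analyticOrderAt_mul ((analyticAt_prodMk_zero hC).pow m) hBa',
            analyticOrderAt_pow (analyticAt_prodMk_zero hC), hk, hBa]
          simp

theorem hasLexOrder_comp_snd {φ : 𝕜 → 𝕜} {s : ℕ} (hφ : AnalyticAt 𝕜 φ 0)
    (hs : analyticOrderAt φ 0 = s) : HasLexOrder (fun p => φ p.2) s 0 := by
  obtain ⟨u, hu, hu0, hφu⟩ := hφ.analyticOrderAt_eq_natCast.1 hs
  refine ⟨fun p => u p.2, hu.fun_comp_of_eq analyticAt_snd rfl, ?_, ?_⟩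
  · simpa using (continuous_snd.tendsto' (0 : 𝕜 × 𝕜) 0 rfl).eventually hφu
  · exact analyticAt_const.analyticOrderAt_eq_zero.2 hu0

theorem HasLexOrder.apply_zero_ne_zero (hF : HasLexOrder F 0 0) : F 0 ≠ 0 := by
  obtain ⟨B, hB, hFB, hl⟩ := hF
  have hF0 : F 0 = B 0 := by simpa using hFB.self_of_nhds
  exact hF0.trans_ne ((analyticAt_prodMk_zero hB).analyticOrderAt_eq_zero.1 hl)

theorem HasLexOrder.eventually_prodMk_zero_eq_zero (hF : HasLexOrder F m l) (hm : m ≠ 0) :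
    ∀ᶠ x in 𝓝 0, F (x, 0) = 0 := by
  obtain ⟨B, -, hFB, -⟩ := hF
  filter_upwards [eventually_prodMk_zero hFB] with x hx
  simp [hx, hm]

theorem HasLexOrder.fst_ne_zero (hF : HasLexOrder F m l) (hF0 : ∀ᶠ x in 𝓝 0, F (x, 0) = 0) :
    m ≠ 0 := by
  rintro rfl
  obtain ⟨B, -, hFB, hl⟩ := hF
  have hB0 : ∀ᶠ x in 𝓝 0, B (x, 0) = 0 := by
    filter_upwards [eventually_prodMk_zero hFB, hF0] with x hx hx0
    simpa [hx0] using hx.symm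
  simp [analyticOrderAt_eq_top.2 hB0] at hl

variable [CompleteSpace 𝕜]

theorem eventually_eq_of_snd_pow_mul_eq {E : Type*} [NormedAddCommGroup E] [NormedSpace 𝕜 E]
    {A B : E × 𝕜 → 𝕜} (hA : AnalyticAt 𝕜 A 0) (hB : AnalyticAt 𝕜 B 0) {m : ℕ}
    (h : ∀ᶠ p in 𝓝 0, p.2 ^ m * A p = p.2 ^ m * B p) : ∀ᶠ p in 𝓝 0, A p = B p := by
  have hdense : Dense {p : E × 𝕜 | p.2 ≠ 0} :=
    (dense_compl_singleton (0 : 𝕜)).preimage isOpenMap_snd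
  filter_upwards [h.eventually_nhds, hA.eventually_analyticAt, hB.eventually_analyticAt]
    with p hp hAp hBp
  refine tendsto_nhds_unique_of_frequently_eq hAp.continuousAt hBp.continuousAt ?_
  refine ((mem_closure_iff_frequently.1 (hdense p)).and_eventually hp).mono ?_
  exact fun q ⟨hq, hAB⟩ => mul_left_cancel₀ (pow_ne_zero m hq) hAB

theorem HasLexOrder.unique (hF : HasLexOrder F m l) (hF' : HasLexOrder F m' l') :
    m = m' ∧ l = l' := by
  wlog hmm' : m ≤ m' generalizing m m' l l'
  · exact (this hF' hF (le_of_not_ge hmm')).imp Eq.symm Eq.symm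
  obtain ⟨k, rfl⟩ := Nat.exists_eq_add_of_le hmm'
  obtain ⟨A, hA, hFA, hl⟩ := hF
  obtain ⟨B, hB, hFB, hl'⟩ := hF'
  have hAB : ∀ᶠ p in 𝓝 0, A p = p.2 ^ k * B p := by
    refine eventually_eq_of_snd_pow_mul_eq hA ((analyticAt_snd.fun_pow k).fun_mul hB) (m := m) ?_
    filter_upwards [hFA, hFB] with p hp hp'
    rw [← hp, hp', pow_add, mul_assoc]
  have hAB0 := analyticOrderAt_congr (f := fun x => A (x, 0)) (eventually_prodMk_zero hAB)
  rw [hl] at hAB0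
  obtain rfl | hk := eq_or_ne k 0
  · simp only [pow_zero, one_mul, hl', Nat.cast_inj] at hAB0
    exact ⟨rfl, hAB0⟩
  · have hzero : analyticOrderAt (fun _ : 𝕜 => (0 : 𝕜)) 0 = ⊤ :=
      analyticOrderAt_eq_top.2 (.of_forall fun _ => rfl)
    simp [hk, hzero] at hAB0

theorem HasLexOrder.not_eventually_eq_zero (hF : HasLexOrder F m l) : ¬ ∀ᶠ p in 𝓝 0, F p = 0 := by
  intro h0
  obtain ⟨B, hB, hFB, hl⟩ := hF
  have hB0 : ∀ᶠ p in 𝓝 0, B p = 0 :=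
    eventually_eq_of_snd_pow_mul_eq hB (analyticAt_const (v := (0 : 𝕜))) (m := m) (by
      filter_upwards [hFB, h0] with p hp hp'
      rw [← hp, hp', mul_zero])
  rw [analyticOrderAt_eq_top.2 (eventually_prodMk_zero hB0)] at hl
  simp at hl

theorem exists_hasLexOrder (hF : AnalyticAt 𝕜 F 0) (hF0 : ¬ ∀ᶠ p in 𝓝 0, F p = 0) :
    ∃ m l, HasLexOrder F m l := by
  -- A germ without lexicographic order is divisible by every power of `w`, hence flat.
  by_contra! hno
  have hdvd (n : ℕ) : ∃ B, AnalyticAt 𝕜 B 0 ∧ ∀ᶠ p in 𝓝 0, F p = p.2 ^ n * B p := by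
    induction n with
    | zero => exact ⟨F, hF, by simp⟩
    | succ n ih =>
      obtain ⟨B, hB, hFB⟩ := ih
      have hBx : ∀ᶠ x in 𝓝 0, B (x, 0) = 0 := by
        rw [← analyticOrderAt_eq_top]
        by_contra hne
        obtain ⟨l, hl⟩ := ENat.ne_top_iff_exists.1 hne
        exact hno n l ⟨B, hB, hFB, hl.symm⟩
      obtain ⟨H, hH, hBH⟩ := exists_analyticAt_eq_add_snd_smul hB
      refine ⟨H, hH, ?_⟩
      filter_upwards [hFB, hBH, (continuous_fst.tendsto' (0 : 𝕜 × 𝕜) 0 rfl).eventually hBx]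
        with p hp hBp hp0
      rw [hp, hBp, hp0, zero_add, smul_eq_mul, pow_succ, mul_assoc]
  refine hF0 (eventually_eq_zero_of_forall_isBigO_norm_pow hF fun n => ?_)
  obtain ⟨B, hB, hFB⟩ := hdvd n
  simp only [zero_add]
  have hsnd : (fun p : 𝕜 × 𝕜 => p.2) =O[𝓝 0] fun p => ‖p‖ :=
    Asymptotics.isBigO_snd_prod'.norm_right
  simpa using ((hsnd.pow n).mul (hB.continuousAt.isBigO_one ℝ)).congr'
    (hFB.mono fun p hp => hp.symm) .rfl

theorem HasLexOrder.eventually_eq_zero_of_mul_eq_zero (hF : HasLexOrder F m l)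
    (hG : AnalyticAt 𝕜 G 0) (hFG : ∀ᶠ p in 𝓝 0, F p * G p = 0) : ∀ᶠ p in 𝓝 0, G p = 0 := by
  by_contra hG0
  obtain ⟨_, _, hG'⟩ := exists_hasLexOrder hG hG0
  exact (hF.mul hG').not_eventually_eq_zero hFG

theorem hasLexOrder_one_of_fderiv {c : ℕ} (hF : AnalyticAt 𝕜 F 0)
    (hF0 : ∀ᶠ x in 𝓝 0, F (x, 0) = 0)
    (hc : analyticOrderAt (fun x => fderiv 𝕜 F (x, 0) (0, 1)) 0 = c) : HasLexOrder F 1 c := by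
  obtain ⟨B, hB, hFB⟩ := exists_analyticAt_eq_add_snd_smul hF
  have hFB' : ∀ᶠ p in 𝓝 0, F p = p.2 * B p := by
    filter_upwards [hFB, (continuous_fst.tendsto' (0 : 𝕜 × 𝕜) 0 rfl).eventually hF0] with p hp hp0
    rw [hp, hp0, zero_add, smul_eq_mul]
  refine ⟨B, hB, by simpa using hFB', ?_⟩
  rw [← hc]
  refine analyticOrderAt_congr ?_
  filter_upwards [eventually_prodMk_zero hFB'.eventually_nhds,
    eventually_prodMk_zero hB.eventually_analyticAt] with x hx hBx
  have hderiv := (hasFDerivAt_snd (𝕜 := 𝕜) (p := (x, (0 : 𝕜)))).fun_mul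
    hBx.differentiableAt.hasFDerivAt
  rw [EventuallyEq.fderiv_eq hx, hderiv.fderiv]
  simp

theorem HasLexOrder.fderiv_snd [CharZero 𝕜] (hF : HasLexOrder F (m + 1) l) :
    HasLexOrder (fun p => fderiv 𝕜 F p (0, 1)) m l := by
  obtain ⟨B, hB, hFB, hl⟩ := hF
  have hdB : AnalyticAt 𝕜 (fun p => fderiv 𝕜 B p (0, 1)) 0 :=
    analyticAt_clm_apply hB.fderiv analyticAt_const
  refine ⟨fun p => (m + 1) * B p + p.2 * fderiv 𝕜 B p (0, 1),
    (analyticAt_const.fun_mul hB).fun_add (analyticAt_snd.fun_mul hdB), ?_, ?_⟩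
  · filter_upwards [hFB.eventually_nhds, hB.eventually_analyticAt] with p hp hBp
    have hderiv := ((hasFDerivAt_snd (𝕜 := 𝕜) (p := p)).pow (m + 1)).fun_mul
      hBp.differentiableAt.hasFDerivAt
    rw [EventuallyEq.fderiv_eq hp, hderiv.fderiv]
    simp
    ring
  · have := analyticOrderAt_mul (f := fun _ : 𝕜 => (m + 1 : 𝕜)) (z₀ := 0) analyticAt_const
      (analyticAt_prodMk_zero hB)
    rw [analyticAt_const.analyticOrderAt_eq_zero.2 (Nat.cast_add_one_ne_zero m), zero_add, hl]
      at this
    simpa [Pi.mul_def] using this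

end LexOrder

section Conjugation

variable {𝕜 E F : Type*} [NontriviallyNormedField 𝕜] [StarRing 𝕜]
  [NormedAddCommGroup E] [NormedSpace 𝕜 E] [StarAddMonoid E] [NormedStarGroup E] [StarModule 𝕜 E]
  [NormedAddCommGroup F] [NormedSpace 𝕜 F] [StarAddMonoid F] [NormedStarGroup F] [StarModule 𝕜 F]

theorem tendsto_star_zero : Tendsto (star : E → E) (𝓝 0) (𝓝 0) :=
  continuous_star.tendsto' 0 0 (star_zero E)

/-- The conjugate `v ↦ conj (f (conj v))` of a function. -/
def starConj {E F : Type*} [Star E] [Star F] (f : E → F) : E → F := fun v => star (f (star v))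

/-- The conjugate of a continuous multilinear map, giving the Taylor coefficients of
`starConj f`. -/
noncomputable def starConjMultilinear {k : ℕ} (p : E [×k]→L[𝕜] F) : E [×k]→L[𝕜] F :=
  MultilinearMap.mkContinuous
    { toFun := fun v => star (p fun i => star (v i))
      map_update_add' := fun v i x y => by
        simp [← Function.comp_def star, Function.comp_update]
      map_update_smul' := fun v i c x => by
        simp [← Function.comp_def star, Function.comp_update] }
    ‖p‖ fun v => by simpa using p.le_opNorm fun i => star (v i)

theorem analyticAt_starConj {f : E → F} (hf : AnalyticAt 𝕜 f 0) :
    AnalyticAt 𝕜 (starConj f) 0 := by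
  obtain ⟨p, r, hp⟩ := hf
  refine ⟨fun k => starConjMultilinear (p k), r, ?_, hp.r_pos, fun {y} hy => ?_⟩
  · refine hp.r_le.trans (FormalMultilinearSeries.radius_le_of_le fun k => ?_)
    exact MultilinearMap.mkContinuous_norm_le _ (norm_nonneg _) _
  · have hy' : star y ∈ Metric.eball (0 : E) r := by
      simpa [enorm_eq_nnnorm] using hy
    simpa [starConjMultilinear, starConj] using (hp.hasSum hy').star

variable [NormedStarGroup 𝕜]

theorem analyticOrderAt_starConj {φ : 𝕜 → F} (hφ : AnalyticAt 𝕜 φ 0) :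
    analyticOrderAt (starConj φ) 0 = analyticOrderAt φ 0 := by
  cases hl : analyticOrderAt φ 0 with
  | top =>
    rw [analyticOrderAt_eq_top] at hl ⊢
    filter_upwards [tendsto_star_zero.eventually hl] with x hx
    rw [starConj, hx, star_zero]
  | coe l =>
    obtain ⟨ψ, hψ, hψ0, hφψ⟩ := hφ.analyticOrderAt_eq_natCast.1 hl
    refine (analyticAt_starConj hφ).analyticOrderAt_eq_natCast.2
      ⟨starConj ψ, analyticAt_starConj hψ, by simpa [starConj] using hψ0, ?_⟩
    filter_upwards [tendsto_star_zero.eventually hφψ] with x hx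
    simpa [starConj] using congrArg star hx

theorem hasLexOrder_starConj_iff {𝕜 : Type*} [NontriviallyNormedField 𝕜] [StarRing 𝕜]
    [CStarRing 𝕜] {f : 𝕜 × 𝕜 → 𝕜} {m l : ℕ} :
    HasLexOrder (starConj f) m l ↔ HasLexOrder f m l := by
  suffices himp : ∀ g : 𝕜 × 𝕜 → 𝕜, HasLexOrder g m l → HasLexOrder (starConj g) m l by
    have hinv : starConj (starConj f) = f := funext fun p => by simp [starConj]
    exact ⟨fun h => hinv ▸ himp _ h, himp f⟩
  rintro g ⟨B, hB, hgB, hl⟩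
  refine ⟨starConj B, analyticAt_starConj hB, ?_, ?_⟩
  · filter_upwards [tendsto_star_zero.eventually hgB] with p hp
    simpa [starConj] using congrArg star hp
  · rw [← hl, ← analyticOrderAt_starConj (analyticAt_prodMk_zero hB)]
    congr 1
    ext x
    simp [starConj, Prod.star_def]

end Conjugation

section SegreMaps

/-- The germ in `((z, χ), τ)` of a normal defining function of dimension one. -/
structure IsNormalGerm {𝕜 : Type*} [NontriviallyNormedField 𝕜] (Q : (𝕜 × 𝕜) × 𝕜 → 𝕜) : Prop where
  analyticAt : AnalyticAt 𝕜 Q 0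
  fst_zero : ∀ᶠ p in 𝓝 (0 : 𝕜 × 𝕜), Q ((0, p.1), p.2) = p.2
  snd_zero : ∀ᶠ p in 𝓝 (0 : 𝕜 × 𝕜), Q ((p.1, 0), p.2) = p.2

/-- The germ of a real normal defining function of dimension one. The conjugate defining function,
which takes its arguments in the order `((χ, z), w)`, is `starConj Q`. -/
structure IsRealGerm {𝕜 : Type*} [NontriviallyNormedField 𝕜] [Star 𝕜] (Q : (𝕜 × 𝕜) × 𝕜 → 𝕜) :
    Prop extends IsNormalGerm Q where
  apply_starConj : ∀ᶠ p in 𝓝 (0 : (𝕜 × 𝕜) × 𝕜), Q (p.1.swap, starConj Q p) = p.2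

/-- The germ of a holomorphic Segre preserving map in dimension one: `f` and `g` are functions of
`(z, w)`, while `ft` and `gt` are functions of `(χ, τ)`. -/
structure IsSegreMap {𝕜 : Type*} [NontriviallyNormedField 𝕜] (Q Q' : (𝕜 × 𝕜) × 𝕜 → 𝕜)
    (f g ft gt : 𝕜 × 𝕜 → 𝕜) : Prop where
  analyticAt_f : AnalyticAt 𝕜 f 0
  analyticAt_g : AnalyticAt 𝕜 g 0
  analyticAt_ft : AnalyticAt 𝕜 ft 0
  analyticAt_gt : AnalyticAt 𝕜 gt 0
  f_zero : f 0 = 0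
  g_zero : g 0 = 0
  ft_zero : ft 0 = 0
  gt_zero : gt 0 = 0
  map_eq : ∀ᶠ p in 𝓝 (0 : (𝕜 × 𝕜) × 𝕜),
    g (p.1.1, Q p) = Q' ((f (p.1.1, Q p), ft (p.1.2, p.2)), gt (p.1.2, p.2))

variable {𝕜 : Type*} [NontriviallyNormedField 𝕜] {Q Q' : (𝕜 × 𝕜) × 𝕜 → 𝕜} {f g ft gt : 𝕜 × 𝕜 → 𝕜}

theorem IsNormalGerm.apply_zero (hQ : IsNormalGerm Q) : Q 0 = 0 := hQ.fst_zero.self_of_nhds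

theorem IsNormalGerm.tendsto_zero (hQ : IsNormalGerm Q) : Tendsto Q (𝓝 0) (𝓝 0) :=
  tendsto_of_continuousAt hQ.analyticAt.continuousAt hQ.apply_zero

theorem IsNormalGerm.fderiv_apply_fst_zero [CompleteSpace 𝕜] (hQ : IsNormalGerm Q) :
    ∀ᶠ p in 𝓝 (0 : 𝕜 × 𝕜), ∀ v : 𝕜 × 𝕜, fderiv 𝕜 Q ((0, p.1), p.2) ((0, v.1), v.2) = v.2 := by
  let ι : 𝕜 × 𝕜 →L[𝕜] (𝕜 × 𝕜) × 𝕜 := (ContinuousLinearMap.inr 𝕜 𝕜 𝕜).prodMap (.id 𝕜 𝕜)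
  filter_upwards [hQ.fst_zero.eventually_nhds, (ι.continuous.tendsto' 0 0 (map_zero ι)).eventually
    hQ.analyticAt.eventually_analyticAt] with p hp hQp v
  have hcomp := hQp.differentiableAt.hasFDerivAt.comp p ι.hasFDerivAt
  exact congrArg (fun L => L v) (hcomp.unique (hasFDerivAt_snd.congr_of_eventuallyEq hp))

theorem IsNormalGerm.analyticAt_comp_graph {F : 𝕜 × 𝕜 → 𝕜} (hQ : IsNormalGerm Q)
    (hF : AnalyticAt 𝕜 F 0) : AnalyticAt 𝕜 (fun p : (𝕜 × 𝕜) × 𝕜 => F (p.1.1, Q p)) 0 :=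
  hF.fun_comp_of_eq ((analyticAt_fst.fun_comp analyticAt_fst).prod hQ.analyticAt)
    (congrArg (Prod.mk 0) hQ.apply_zero)

theorem IsSegreMap.analyticAt_image (h : IsSegreMap Q Q' f g ft gt) (hQ : IsNormalGerm Q) :
    AnalyticAt 𝕜 (fun p : (𝕜 × 𝕜) × 𝕜 =>
      ((f (p.1.1, Q p), ft (p.1.2, p.2)), gt (p.1.2, p.2))) 0 := by
  have hτ : AnalyticAt 𝕜 (fun p : (𝕜 × 𝕜) × 𝕜 => (p.1.2, p.2)) 0 :=
    (analyticAt_snd.fun_comp analyticAt_fst).prod analyticAt_snd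
  exact ((hQ.analyticAt_comp_graph h.analyticAt_f).prod
    (h.analyticAt_ft.fun_comp_of_eq hτ rfl)).prod (h.analyticAt_gt.fun_comp_of_eq hτ rfl)

theorem IsSegreMap.image_zero (h : IsSegreMap Q Q' f g ft gt) (hQ : IsNormalGerm Q) :
    ((f (0, Q 0), ft 0), gt 0) = 0 := by
  rw [hQ.apply_zero, h.ft_zero, h.gt_zero]
  exact congrArg (fun z => ((z, (0 : 𝕜)), (0 : 𝕜))) h.f_zero

theorem IsSegreMap.tendsto_image (h : IsSegreMap Q Q' f g ft gt) (hQ : IsNormalGerm Q) :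
    Tendsto (fun p : (𝕜 × 𝕜) × 𝕜 => ((f (p.1.1, Q p), ft (p.1.2, p.2)), gt (p.1.2, p.2)))
      (𝓝 0) (𝓝 0) :=
  tendsto_of_continuousAt (h.analyticAt_image hQ).continuousAt (h.image_zero hQ)

theorem IsSegreMap.eventually_g_eq_zero (h : IsSegreMap Q Q' f g ft gt) (hQ : IsNormalGerm Q)
    (hQ' : IsNormalGerm Q') : ∀ᶠ z in 𝓝 (0 : 𝕜), g (z, 0) = 0 := by
  have hf : Tendsto (fun z : 𝕜 => f (z, 0)) (𝓝 0) (𝓝 0) :=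
    tendsto_of_continuousAt (analyticAt_prodMk_zero h.analyticAt_f).continuousAt h.f_zero
  filter_upwards [eventually_prodMk_zero (eventually_prodMk_zero h.map_eq),
    eventually_prodMk_zero hQ.snd_zero,
    hf.eventually (eventually_prodMk_zero hQ'.snd_zero)] with z hmap hz hz'
  simpa only [hz, show ft (0, 0) = 0 from h.ft_zero, show gt (0, 0) = 0 from h.gt_zero, hz']
    using hmap

section Reality

variable [StarRing 𝕜]

theorem starConj_slice (Q : (𝕜 × 𝕜) × 𝕜 → 𝕜) :
    starConj (fun p => Q (p, 0)) = fun p => starConj Q (p, 0) := by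
  ext p
  simp [starConj, Prod.star_def]

variable [CStarRing 𝕜]

theorem IsNormalGerm.starConj (hQ : IsNormalGerm Q) : IsNormalGerm (starConj Q) where
  analyticAt := analyticAt_starConj hQ.analyticAt
  fst_zero := by
    filter_upwards [tendsto_star_zero.eventually hQ.fst_zero] with p hp
    simpa [HSPMpaper.starConj, Prod.star_def] using congrArg star hp
  snd_zero := by
    filter_upwards [tendsto_star_zero.eventually hQ.snd_zero] with p hp
    simpa [HSPMpaper.starConj, Prod.star_def] using congrArg star hp

theorem IsRealGerm.starConj_apply (hQ : IsRealGerm Q) :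
    ∀ᶠ p in 𝓝 (0 : (𝕜 × 𝕜) × 𝕜), starConj Q (p.1.swap, Q p) = p.2 := by
  filter_upwards [tendsto_star_zero.eventually hQ.apply_starConj] with p hp
  simpa [starConj, Prod.star_def, Prod.swap] using congrArg star hp

theorem IsRealGerm.starConj (hQ : IsRealGerm Q) : IsRealGerm (starConj Q) where
  toIsNormalGerm := hQ.toIsNormalGerm.starConj
  apply_starConj := by
    simpa [HSPMpaper.starConj] using hQ.starConj_apply

theorem IsSegreMap.symm (h : IsSegreMap Q Q' f g ft gt) (hQ : IsRealGerm Q)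
    (hQ' : IsRealGerm Q') : IsSegreMap (starConj Q) (starConj Q') ft gt f g where
  analyticAt_f := h.analyticAt_ft
  analyticAt_g := h.analyticAt_gt
  analyticAt_ft := h.analyticAt_f
  analyticAt_gt := h.analyticAt_g
  f_zero := h.ft_zero
  g_zero := h.gt_zero
  ft_zero := h.f_zero
  gt_zero := h.g_zero
  map_eq := by
    have hsolve : Tendsto (fun p : (𝕜 × 𝕜) × 𝕜 => (p.1.swap, starConj Q p)) (𝓝 0) (𝓝 0) :=
      ((continuous_swap.comp continuous_fst).tendsto' (0 : (𝕜 × 𝕜) × 𝕜) 0 rfl).prodMk_nhds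
        hQ.toIsNormalGerm.starConj.tendsto_zero
    filter_upwards [hsolve.eventually h.map_eq, hQ.apply_starConj,
      ((h.tendsto_image hQ.toIsNormalGerm).comp hsolve).eventually hQ'.starConj_apply]
      with p hmap hp hinv
    simp only [Function.comp_apply, Prod.fst_swap, Prod.snd_swap, Prod.swap_prod_mk, hp]
      at hmap hinv
    rw [hmap, hinv]

end Reality

theorem IsSegreMap.fderiv_image_eq_zero_of_tangent [CompleteSpace 𝕜]
    (h : IsSegreMap Q Q' f g ft gt) (hQ : IsNormalGerm Q) (hQ' : IsNormalGerm Q') :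
    ∀ᶠ p in 𝓝 (0 : (𝕜 × 𝕜) × 𝕜), ∀ v : 𝕜 × 𝕜, fderiv 𝕜 Q p ((0, v.1), v.2) = 0 →
      fderiv 𝕜 Q' ((f (p.1.1, Q p), ft (p.1.2, p.2)), gt (p.1.2, p.2))
        ((0, fderiv 𝕜 ft (p.1.2, p.2) v), fderiv 𝕜 gt (p.1.2, p.2) v) = 0 := by
  have hw : Tendsto (fun p : (𝕜 × 𝕜) × 𝕜 => (p.1.1, Q p)) (𝓝 0) (𝓝 0) :=
    ((continuous_fst.comp continuous_fst).tendsto' (0 : (𝕜 × 𝕜) × 𝕜) 0 rfl).prodMk_nhds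
      hQ.tendsto_zero
  have hτ : Tendsto (fun p : (𝕜 × 𝕜) × 𝕜 => (p.1.2, p.2)) (𝓝 0) (𝓝 0) :=
    Continuous.tendsto' (by fun_prop) 0 0 rfl
  filter_upwards [h.map_eq.eventually_nhds, hQ.analyticAt.eventually_analyticAt,
    (h.tendsto_image hQ).eventually hQ'.analyticAt.eventually_analyticAt,
    hw.eventually h.analyticAt_f.eventually_analyticAt,
    hw.eventually h.analyticAt_g.eventually_analyticAt,
    hτ.eventually h.analyticAt_ft.eventually_analyticAt,
    hτ.eventually h.analyticAt_gt.eventually_analyticAt] with p hp hQp hQ'p hf hg hft hgt v hv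
  have hdw : HasFDerivAt (fun q : (𝕜 × 𝕜) × 𝕜 => (q.1.1, Q q)) _ p :=
    (hasFDerivAt_fst.comp p hasFDerivAt_fst).prodMk hQp.differentiableAt.hasFDerivAt
  have hdτ : HasFDerivAt (fun q : (𝕜 × 𝕜) × 𝕜 => (q.1.2, q.2)) _ p :=
    (hasFDerivAt_snd.comp p hasFDerivAt_fst).prodMk (hasFDerivAt_snd (𝕜 := 𝕜))
  have hdg := hg.differentiableAt.hasFDerivAt.comp p hdw
  have hdQ' := hQ'p.differentiableAt.hasFDerivAt.comp p
    (((hf.differentiableAt.hasFDerivAt.comp p hdw).prodMk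
      (hft.differentiableAt.hasFDerivAt.comp p hdτ)).prodMk
      (hgt.differentiableAt.hasFDerivAt.comp p hdτ))
  have := congrArg (fun L => L ((0, v.1), v.2)) (hdg.unique (hdQ'.congr_of_eventuallyEq hp))
  simpa [hv, Prod.mk_zero_zero] using this.symm

theorem IsSegreMap.hasLexOrder_comp_image_slice (h : IsSegreMap Q Q' f g ft gt)
    (hQ : IsNormalGerm Q) {F : 𝕜 × 𝕜 → 𝕜} {m l r s : ℕ} (hF : HasLexOrder F m l)
    (hr : analyticOrderAt (fun z => f (z, 0)) 0 = r)
    (hs : analyticOrderAt (fun χ => ft (χ, 0)) 0 = s) :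
    HasLexOrder (fun p => F (f (p.1, Q (p, 0)), ft (p.2, 0))) (s * m) (l * r) := by
  have hft := analyticAt_prodMk_zero h.analyticAt_ft
  have hs0 : s ≠ 0 := by
    rintro rfl
    exact hft.analyticOrderAt_ne_zero.2 h.ft_zero hs
  have hfr : analyticOrderAt (fun z => f (z, Q ((z, 0), 0))) 0 = r := by
    rw [← hr]
    refine analyticOrderAt_congr ?_
    filter_upwards [eventually_prodMk_zero hQ.snd_zero] with z hz
    rw [hz]
  simpa using hF.comp (analyticAt_prodMk_zero (hQ.analyticAt_comp_graph h.analyticAt_f))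
    ((congrArg (fun w => f (0, w)) hQ.apply_zero).trans h.f_zero) hfr
    (hasLexOrder_comp_snd hft hs) hs0

section CompleteField

variable [CompleteSpace 𝕜]

theorem IsNormalGerm.exists_hasLexOrder_slice (hQ : IsNormalGerm Q)
    (hq : ¬ ∀ᶠ p in 𝓝 (0 : 𝕜 × 𝕜), Q (p, 0) = 0) :
    ∃ m l, HasLexOrder (fun p => Q (p, 0)) (m + 1) l := by
  obtain ⟨m, l, hml⟩ := exists_hasLexOrder (analyticAt_prodMk_zero hQ.analyticAt) hq
  obtain ⟨m, rfl⟩ := Nat.exists_eq_succ_of_ne_zero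
    (hml.fst_ne_zero (eventually_prodMk_zero hQ.snd_zero))
  exact ⟨m, l, hml⟩

theorem IsSegreMap.eventually_fderiv_mul_eq_zero (h : IsSegreMap Q Q' f g ft gt)
    (hQ : IsNormalGerm Q) (hQ' : IsNormalGerm Q') (hgt : ∀ᶠ χ in 𝓝 (0 : 𝕜), gt (χ, 0) = 0)
    (hgtτ : ∀ᶠ χ in 𝓝 (0 : 𝕜), fderiv 𝕜 gt (χ, 0) (0, 1) = 0) :
    ∀ᶠ p in 𝓝 (0 : 𝕜 × 𝕜),
      fderiv 𝕜 (fun q => Q' (q, 0)) (f (p.1, Q (p, 0)), ft (p.2, 0)) (0, 1) *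
        fderiv 𝕜 ft (p.2, 0) (fderiv 𝕜 Q (p, 0) (0, 1), -fderiv 𝕜 Q (p, 0) ((0, 1), 0)) = 0 := by
  have hdgt : ∀ᶠ χ in 𝓝 (0 : 𝕜), fderiv 𝕜 gt (χ, 0) = 0 := by
    filter_upwards [hgt.eventually_nhds, hgtτ,
      eventually_prodMk_zero h.analyticAt_gt.eventually_analyticAt] with χ hχ hχτ hgtχ
    have hχ1 := fderiv_comp_prodMk_zero hgtχ.differentiableAt 1
    rw [EventuallyEq.fderiv_eq (f := fun _ => 0) hχ] at hχ1
    ext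
    · simpa using hχ1.symm
    · simpa using hχτ
  filter_upwards [eventually_prodMk_zero (h.fderiv_image_eq_zero_of_tangent hQ hQ'),
    (continuous_snd.tendsto' (0 : 𝕜 × 𝕜) 0 rfl).eventually hgt,
    (continuous_snd.tendsto' (0 : 𝕜 × 𝕜) 0 rfl).eventually hdgt,
    eventually_prodMk_zero ((h.tendsto_image hQ).eventually hQ'.analyticAt.eventually_analyticAt)]
    with p hp hgtp hdgtp hQ'p
  -- `Q_τ ∂_χ - Q_χ ∂_τ` is tangent to the fibres of `(z, χ, τ) ↦ (z, w)`.
  have hv : fderiv 𝕜 Q (p, 0) ((0, fderiv 𝕜 Q (p, 0) (0, 1)),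
      -fderiv 𝕜 Q (p, 0) ((0, 1), 0)) = 0 := by
    rw [show (((0, fderiv 𝕜 Q (p, 0) (0, 1)), -fderiv 𝕜 Q (p, 0) ((0, 1), 0)) : (𝕜 × 𝕜) × 𝕜) =
      fderiv 𝕜 Q (p, 0) (0, 1) • ((0, 1), 0) - fderiv 𝕜 Q (p, 0) ((0, 1), 0) • (0, 1) by simp,
      map_sub, map_smul, map_smul, smul_eq_mul, smul_eq_mul, mul_comm, sub_self]
  have htangent := hp (_, _) hv
  simp only [hgtp, hdgtp, zero_apply] at htangent hQ'p
  rw [fderiv_comp_prodMk_zero hQ'p.differentiableAt, mul_comm, ← smul_eq_mul, ← map_smul]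
  simpa using htangent

theorem IsSegreMap.eventually_fderiv_ft_eq_zero [CharZero 𝕜] (h : IsSegreMap Q Q' f g ft gt)
    (hQ : IsNormalGerm Q) (hQ' : IsNormalGerm Q')
    (hq' : ¬ ∀ᶠ p in 𝓝 (0 : 𝕜 × 𝕜), Q' (p, 0) = 0) {r s : ℕ}
    (hr : analyticOrderAt (fun z => f (z, 0)) 0 = r)
    (hs : analyticOrderAt (fun χ => ft (χ, 0)) 0 = s) (hgt : ∀ᶠ χ in 𝓝 (0 : 𝕜), gt (χ, 0) = 0)
    (hgtτ : ∀ᶠ χ in 𝓝 (0 : 𝕜), fderiv 𝕜 gt (χ, 0) (0, 1) = 0) :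
    ∀ᶠ χ in 𝓝 (0 : 𝕜), fderiv 𝕜 ft (χ, 0) (1, 0) = 0 := by
  obtain ⟨m, l, hml⟩ := hQ'.exists_hasLexOrder_slice hq'
  have hQ0 : AnalyticAt 𝕜 (fun p : 𝕜 × 𝕜 => fderiv 𝕜 Q (p, 0)) 0 :=
    analyticAt_prodMk_zero hQ.analyticAt.fderiv
  have hft0 : AnalyticAt 𝕜 (fun p : 𝕜 × 𝕜 => fderiv 𝕜 ft (p.2, 0)) 0 :=
    (analyticAt_prodMk_zero h.analyticAt_ft.fderiv).fun_comp_of_eq analyticAt_snd rfl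
  have htangent : AnalyticAt 𝕜 (fun p : 𝕜 × 𝕜 =>
      (fderiv 𝕜 Q (p, 0) (0, 1), -fderiv 𝕜 Q (p, 0) ((0, 1), 0))) 0 :=
    (analyticAt_clm_apply hQ0 analyticAt_const).prod
      (analyticAt_clm_apply hQ0 analyticAt_const).fun_neg
  have hzero := (h.hasLexOrder_comp_image_slice hQ hml.fderiv_snd hr
    hs).eventually_eq_zero_of_mul_eq_zero (analyticAt_clm_apply hft0 htangent)
    (h.eventually_fderiv_mul_eq_zero hQ hQ' hgt hgtτ)
  have hτ : Tendsto (fun χ : 𝕜 => ((0 : 𝕜), χ)) (𝓝 0) (𝓝 0) :=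
    Continuous.tendsto' (by fun_prop) 0 0 rfl
  filter_upwards [hτ.eventually hzero, eventually_prodMk_zero hQ.fderiv_apply_fst_zero]
    with χ hχ hQχ
  have hQτ : fderiv 𝕜 Q ((0, χ), 0) (0, 1) = 1 := hQχ (0, 1)
  simpa only [hQτ, hQχ (1, 0), neg_zero] using hχ

theorem IsSegreMap.exists_hasLexOrder_gt [CharZero 𝕜] (h : IsSegreMap Q Q' f g ft gt)
    (hQ : IsNormalGerm Q) (hQ' : IsNormalGerm Q')
    (hq' : ¬ ∀ᶠ p in 𝓝 (0 : 𝕜 × 𝕜), Q' (p, 0) = 0) {r s : ℕ}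
    (hr : analyticOrderAt (fun z => f (z, 0)) 0 = r)
    (hs : analyticOrderAt (fun χ => ft (χ, 0)) 0 = s) (hgt : ∀ᶠ χ in 𝓝 (0 : 𝕜), gt (χ, 0) = 0) :
    ∃ c, HasLexOrder gt 1 c := by
  suffices hne : analyticOrderAt (fun χ => fderiv 𝕜 gt (χ, 0) (0, 1)) 0 ≠ ⊤ by
    obtain ⟨c, hc⟩ := ENat.ne_top_iff_exists.1 hne
    exact ⟨c, hasLexOrder_one_of_fderiv h.analyticAt_gt hgt hc.symm⟩
  intro htop
  have hft := analyticAt_prodMk_zero h.analyticAt_ft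
  have hderiv : ∀ᶠ χ in 𝓝 (0 : 𝕜), deriv (fun χ => ft (χ, 0)) χ = 0 := by
    filter_upwards [h.eventually_fderiv_ft_eq_zero hQ hQ' hq' hr hs hgt
      (analyticOrderAt_eq_top.1 htop),
      eventually_prodMk_zero h.analyticAt_ft.eventually_analyticAt] with χ hχ hftχ
    rw [← fderiv_apply_one_eq_deriv, fderiv_comp_prodMk_zero hftχ.differentiableAt, hχ]
  have htop' := (analyticOrderAt_deriv_eq_top_iff_of_eq_zero hft h.ft_zero).1
    (analyticOrderAt_eq_top.2 hderiv)
  exact ENat.natCast_ne_top s (hs.symm.trans htop')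

theorem IsSegreMap.exists_hasLexOrder_slice (h : IsSegreMap Q Q' f g ft gt)
    (hQ : IsNormalGerm Q) {m l' r s c : ℕ} (hq' : HasLexOrder (fun p => Q' (p, 0)) m l')
    (hr : analyticOrderAt (fun z => f (z, 0)) 0 = r)
    (hs : analyticOrderAt (fun χ => ft (χ, 0)) 0 = s)
    (hg0 : ∀ᶠ z in 𝓝 (0 : 𝕜), g (z, 0) = 0) (hgt0 : ∀ᶠ χ in 𝓝 (0 : 𝕜), gt (χ, 0) = 0)
    (hg : HasLexOrder g 1 c) :
    ∃ l, HasLexOrder (fun p => Q (p, 0)) (s * m) l ∧ l + c = l' * r := by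
  have hcomp : HasLexOrder (fun p => g (p.1, Q (p, 0))) (s * m) (l' * r) := by
    refine (h.hasLexOrder_comp_image_slice hQ hq' hr hs).congr ?_
    filter_upwards [eventually_prodMk_zero h.map_eq,
      (continuous_snd.tendsto' (0 : 𝕜 × 𝕜) 0 rfl).eventually hgt0] with p hmap hp
    rw [hmap, hp]
  have hq : ¬ ∀ᶠ p in 𝓝 (0 : 𝕜 × 𝕜), Q (p, 0) = 0 := fun hq => by
    refine hcomp.not_eventually_eq_zero ?_
    filter_upwards [hq, (continuous_fst.tendsto' (0 : 𝕜 × 𝕜) 0 rfl).eventually hg0] with p hp hgp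
    rw [hp, hgp]
  obtain ⟨k, l, hkl⟩ := hQ.exists_hasLexOrder_slice hq
  have hid : analyticOrderAt (fun x : 𝕜 => x) 0 = (1 : ℕ) := mod_cast analyticOrderAt_id
  obtain ⟨hk, hl⟩ := hcomp.unique
    (hg.comp (a := fun p => p.1) analyticAt_fst rfl hid hkl k.succ_ne_zero)
  rw [mul_one] at hk
  exact ⟨l, hk ▸ hkl, by rw [hl]; ring⟩

end CompleteField

section Symmetry

variable [CompleteSpace 𝕜] [CharZero 𝕜] [StarRing 𝕜] [CStarRing 𝕜]

theorem IsSegreMap.exists_lexOrder_relations (h : IsSegreMap Q Q' f g ft gt) (hQ : IsRealGerm Q)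
    (hQ' : IsRealGerm Q') (hq' : ¬ ∀ᶠ p in 𝓝 (0 : 𝕜 × 𝕜), Q' (p, 0) = 0) {r s : ℕ}
    (hr : analyticOrderAt (fun z => f (z, 0)) 0 = r)
    (hs : analyticOrderAt (fun χ => ft (χ, 0)) 0 = s) :
    r = s ∧ ∃ m l l' c ct, HasLexOrder (fun p => Q (p, 0)) (r * (m + 1)) l ∧
      HasLexOrder (fun p => Q' (p, 0)) (m + 1) l' ∧ HasLexOrder g 1 c ∧ HasLexOrder gt 1 ct ∧
      l + c = l' * r ∧ l + ct = l' * r := by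
  have hsymm := h.symm hQ hQ'
  have hg0 := h.eventually_g_eq_zero hQ.toIsNormalGerm hQ'.toIsNormalGerm
  have hgt0 := hsymm.eventually_g_eq_zero hQ.starConj.toIsNormalGerm hQ'.starConj.toIsNormalGerm
  obtain ⟨m, l', hml'⟩ := hQ'.exists_hasLexOrder_slice hq'
  have hml'_conj : HasLexOrder (fun p => starConj Q' (p, 0)) (m + 1) l' :=
    starConj_slice Q' ▸ hasLexOrder_starConj_iff.2 hml'
  obtain ⟨ct, hct⟩ := h.exists_hasLexOrder_gt hQ.toIsNormalGerm hQ'.toIsNormalGerm hq' hr hs hgt0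
  obtain ⟨c, hc⟩ := hsymm.exists_hasLexOrder_gt hQ.starConj.toIsNormalGerm
    hQ'.starConj.toIsNormalGerm hml'_conj.not_eventually_eq_zero hs hr hg0
  obtain ⟨l, hl, hlc⟩ :=
    h.exists_hasLexOrder_slice hQ.toIsNormalGerm hml' hr hs hg0 hgt0 hc
  obtain ⟨lt, hlt, hltct⟩ := hsymm.exists_hasLexOrder_slice hQ.starConj.toIsNormalGerm hml'_conj
    hs hr hgt0 hg0 hct
  rw [← starConj_slice, hasLexOrder_starConj_iff] at hlt
  obtain ⟨hsr, rfl⟩ := hl.unique hlt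
  obtain rfl := Nat.eq_of_mul_eq_mul_right m.succ_pos hsr
  exact ⟨rfl, m, l, l', c, ct, hl, hml', hc, hct, hlc, hltct⟩

theorem IsSegreMap.lexOrder_eq_of_self (h : IsSegreMap Q Q f g ft gt) (hQ : IsRealGerm Q)
    (hq : ¬ ∀ᶠ p in 𝓝 (0 : 𝕜 × 𝕜), Q (p, 0) = 0) {r s : ℕ}
    (hr : analyticOrderAt (fun z => f (z, 0)) 0 = r)
    (hs : analyticOrderAt (fun χ => ft (χ, 0)) 0 = s) :
    r = 1 ∧ HasLexOrder g 1 0 ∧ HasLexOrder gt 1 0 := by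
  obtain ⟨-, m, l, l', c, ct, hl, hl', hc, hct, hlc, hlct⟩ :=
    h.exists_lexOrder_relations hQ hQ hq hr hs
  obtain ⟨hrm, rfl⟩ := hl.unique hl'
  obtain rfl : r = 1 := (Nat.mul_eq_right m.succ_ne_zero).1 hrm
  obtain rfl : c = 0 := by omega
  obtain rfl : ct = 0 := by omega
  exact ⟨rfl, hc, hct⟩

end Symmetry

end SegreMaps

section Translation

/-- The germ in `((z, χ), τ)` of a defining function of dimension one, with its arguments in
`Fin 1 → ℂ` replaced by scalars. -/
def scalarQ (Q : (Fin 1 → ℂ) → (Fin 1 → ℂ) → ℂ → ℂ) : (ℂ × ℂ) × ℂ → ℂ :=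
  fun p => Q (fun _ => p.1.1) (fun _ => p.1.2) p.2

/-- The germ in `(z, w)` of a component of a Segre preserving map in dimension one, with its
argument in `Fin 1 → ℂ` replaced by a scalar. -/
def scalarG (g : (Fin 1 → ℂ) → ℂ → ℂ) : ℂ × ℂ → ℂ := fun p => g (fun _ => p.1) p.2

theorem const_apply_zero {X : Type*} (z : Fin 1 → X) : (fun _ => z 0) = z :=
  funext fun i => congrArg z (Subsingleton.elim 0 i)

theorem deriv_ne_zero_of_analyticOrderAt_eq_one {𝕜 E : Type*} [NontriviallyNormedField 𝕜]
    [CharZero 𝕜] [NormedAddCommGroup E] [NormedSpace 𝕜 E] [CompleteSpace E] {φ : 𝕜 → E} {x : 𝕜}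
    (hφ : AnalyticAt 𝕜 φ x) (h : analyticOrderAt φ x = (1 : ℕ)) : deriv φ x ≠ 0 := by
  simpa using ((analyticOrderAt_eq_nat_iff_iteratedDeriv_eq_zero hφ).1 h).2

section Taylor

variable {φ : (Fin 1 → ℂ) → ℂ}

theorem comp_funUnique_eq (φ : (Fin 1 → ℂ) → ℂ) :
    (fun x => φ fun _ => x) ∘ ContinuousLinearEquiv.funUnique (Fin 1) ℂ ℂ = φ :=
  funext fun z => congrArg φ (const_apply_zero z)

theorem pd_zero_eq_deriv (φ : (Fin 1 → ℂ) → ℂ) (z : Fin 1 → ℂ) :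
    pd 0 φ z = deriv (fun x => φ fun _ => x) (z 0) := by
  have := (ContinuousLinearEquiv.funUnique (Fin 1) ℂ ℂ).comp_right_fderiv
    (f := fun x => φ fun _ => x) (x := z)
  rw [comp_funUnique_eq] at this
  rw [pd, this]
  simp

theorem homogTerm_apply (d : ℕ) (φ : (Fin 1 → ℂ) → ℂ) (z : Fin 1 → ℂ) :
    homogTerm d φ z = z 0 ^ d * iteratedDeriv d (fun x => φ fun _ => x) 0 / d.factorial := by
  have := (ContinuousLinearEquiv.funUnique (Fin 1) ℂ ℂ).iteratedFDerivWithin_comp_right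
    (fun x => φ fun _ => x) uniqueDiffOn_univ (x := 0) (Set.mem_univ _) d
  rw [Set.preimage_univ, iteratedFDerivWithin_univ, iteratedFDerivWithin_univ,
    comp_funUnique_eq] at this
  rw [homogTerm, this, ContinuousMultilinearMap.compContinuousLinearMap_apply,
    iteratedFDeriv_apply_eq_iteratedDeriv_mul_prod]
  simp

theorem vanishOrder_eq_of_analyticOrderAt {r : ℕ} (hφ : AnalyticAt ℂ (fun x => φ fun _ => x) 0)
    (hr : analyticOrderAt (fun x => φ fun _ => x) 0 = r) : vanishOrder φ = r := by
  obtain ⟨hlt, hne⟩ := (analyticOrderAt_eq_nat_iff_iteratedDeriv_eq_zero hφ).1 hr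
  have hmem : homogTerm r φ ≠ 0 := fun h0 => by
    have := (homogTerm_apply r φ fun _ => 1).symm.trans (congrFun h0 _)
    simp [hne, Nat.factorial_ne_zero] at this
  refine le_antisymm (Nat.sInf_le hmem) (le_csInf ⟨r, hmem⟩ fun d hd => ?_)
  by_contra! hdr
  exact hd (funext fun z => by simp [homogTerm_apply, hlt d hdr])

end Taylor

theorem analyticAt_const_pi {𝕜 ι E F : Type*} [NontriviallyNormedField 𝕜] [Fintype ι]
    [NormedAddCommGroup E] [NormedSpace 𝕜 E] [NormedAddCommGroup F] [NormedSpace 𝕜 F] {φ : E → F}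
    {x : E} (hφ : AnalyticAt 𝕜 φ x) : AnalyticAt 𝕜 (fun y (_ : ι) => φ y) x :=
  AnalyticAt.pi fun _ => hφ

section DefiningFunctions

variable {Q Q' : (Fin 1 → ℂ) → (Fin 1 → ℂ) → ℂ → ℂ}

theorem IsNormalDF.isNormalGerm (hQ : IsNormalDF Q) : IsNormalGerm (scalarQ Q) where
  analyticAt := AnalyticAt.fun_comp
    (g := fun q : (Fin 1 → ℂ) × (Fin 1 → ℂ) × ℂ => Q q.1 q.2.1 q.2.2)
    (f := fun p : (ℂ × ℂ) × ℂ => ((fun _ : Fin 1 => p.1.1), (fun _ : Fin 1 => p.1.2), p.2))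
    hQ.1.self_of_nhds
    ((analyticAt_const_pi (analyticAt_fst.fun_comp analyticAt_fst)).prod
      ((analyticAt_const_pi (analyticAt_snd.fun_comp analyticAt_fst)).prod analyticAt_snd))
  fst_zero := by
    have hχτ : Tendsto (fun p : ℂ × ℂ => ((0 : Fin 1 → ℂ), (fun _ : Fin 1 => p.1), p.2))
        (𝓝 0) (𝓝 0) := Continuous.tendsto' (by fun_prop) 0 0 rfl
    exact (hχτ.eventually hQ.2).mono fun p hp => hp.1
  snd_zero := by
    have hzτ : Tendsto (fun p : ℂ × ℂ => ((fun _ : Fin 1 => p.1), (0 : Fin 1 → ℂ), p.2))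
        (𝓝 0) (𝓝 0) := Continuous.tendsto' (by fun_prop) 0 0 rfl
    exact (hzτ.eventually hQ.2).mono fun p hp => hp.2

theorem IsRealNormalDF.isRealGerm (hQ : IsRealNormalDF Q) : IsRealGerm (scalarQ Q) where
  toIsNormalGerm := hQ.1.isNormalGerm
  apply_starConj := by
    have hswap : Tendsto (fun p : (ℂ × ℂ) × ℂ =>
        ((fun _ : Fin 1 => p.1.2), (fun _ : Fin 1 => p.1.1), p.2)) (𝓝 0) (𝓝 0) :=
      Continuous.tendsto' (by fun_prop) 0 0 rfl
    exact (hswap.eventually hQ.2).mono fun p hp => hp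

theorem FiniteType.not_eventually_scalarQ (hQ : FiniteType Q) :
    ¬ ∀ᶠ p in 𝓝 (0 : ℂ × ℂ), scalarQ Q (p, 0) = 0 := by
  refine fun h => hQ ?_
  have hcoord : Tendsto (fun p : (Fin 1 → ℂ) × (Fin 1 → ℂ) => (p.1 0, p.2 0)) (𝓝 0) (𝓝 0) :=
    Continuous.tendsto' (by fun_prop) 0 0 rfl
  filter_upwards [hcoord.eventually h] with p hp
  simpa only [scalarQ, const_apply_zero] using hp

end DefiningFunctions

section Maps

variable {f ft : (Fin 1 → ℂ) → ℂ → Fin 1 → ℂ} {g gt : (Fin 1 → ℂ) → ℂ → ℂ}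

theorem analyticAt_scalarG (hg : AnalyticAt ℂ (fun q : (Fin 1 → ℂ) × ℂ => g q.1 q.2) 0) :
    AnalyticAt ℂ (scalarG g) 0 :=
  AnalyticAt.fun_comp (g := fun q : (Fin 1 → ℂ) × ℂ => g q.1 q.2)
    (f := fun p : ℂ × ℂ => ((fun _ : Fin 1 => p.1), p.2)) hg
    ((analyticAt_const_pi analyticAt_fst).prod analyticAt_snd)

theorem IsHSPM.isSegreMap {Q Q' : (Fin 1 → ℂ) → (Fin 1 → ℂ) → ℂ → ℂ}
    (h : IsHSPM Q Q' f g ft gt) :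
    IsSegreMap (scalarQ Q) (scalarQ Q') (scalarG fun z w => f z w 0) (scalarG g)
      (scalarG fun z w => ft z w 0) (scalarG gt) := by
  obtain ⟨hf, hg, hft, hgt, f0, g0, ft0, gt0, hmap⟩ := h
  refine ⟨analyticAt_scalarG (analyticAt_pi_iff.1 hf.self_of_nhds 0),
    analyticAt_scalarG hg.self_of_nhds,
    analyticAt_scalarG (analyticAt_pi_iff.1 hft.self_of_nhds 0),
    analyticAt_scalarG hgt.self_of_nhds, congrFun f0 0, g0, congrFun ft0 0, gt0, ?_⟩
  have hscalar : Tendsto (fun p : (ℂ × ℂ) × ℂ =>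
      ((fun _ : Fin 1 => p.1.1), (fun _ : Fin 1 => p.1.2), p.2)) (𝓝 0) (𝓝 0) :=
    Continuous.tendsto' (by fun_prop) 0 0 rfl
  filter_upwards [hscalar.eventually hmap] with p hp
  simpa only [scalarQ, scalarG, const_apply_zero] using hp

theorem exists_analyticOrderAt_eq_of_jacz (h : ¬ ∀ᶠ z in 𝓝 (0 : Fin 1 → ℂ), (jacz f z).det = 0) :
    ∃ r : ℕ, analyticOrderAt (fun z => scalarG (fun z w => f z w 0) (z, 0)) 0 = r := by
  suffices hne : analyticOrderAt (fun z => scalarG (fun z w => f z w 0) (z, 0)) 0 ≠ ⊤ by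
    obtain ⟨r, hr⟩ := ENat.ne_top_iff_exists.1 hne
    exact ⟨r, hr.symm⟩
  refine fun htop => h ?_
  have hcoord : Tendsto (fun z : Fin 1 → ℂ => z 0) (𝓝 0) (𝓝 0) :=
    Continuous.tendsto' (by fun_prop) 0 0 rfl
  filter_upwards [hcoord.eventually (analyticOrderAt_eq_top.1 htop).eventually_nhds] with z hz
  rw [Matrix.det_fin_one, jacz, Matrix.of_apply, pd_zero_eq_deriv]
  exact (EventuallyEq.deriv_eq (f := fun _ => 0) hz).trans (deriv_const _ _)

theorem not_eventually_eq_zero_of_analyticOrderAt {r : ℕ}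
    (hr : analyticOrderAt (fun z => scalarG (fun z w => f z w 0) (z, 0)) 0 = r) :
    ¬ ∀ᶠ z in 𝓝 (0 : Fin 1 → ℂ), f z 0 = 0 := by
  intro h
  have hconst : Tendsto (fun z : ℂ => (fun _ : Fin 1 => z)) (𝓝 0) (𝓝 0) :=
    Continuous.tendsto' (by fun_prop) 0 0 rfl
  have htop := analyticOrderAt_eq_top.2 ((hconst.eventually h).mono fun z hz =>
    show scalarG (fun z w => f z w 0) (z, 0) = 0 from congrFun hz 0)
  exact ENat.natCast_ne_top r (hr.symm.trans htop)

theorem fderiv_apply_eq_fderiv_scalarG (hg : DifferentiableAt ℂ (scalarG g) 0)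
    (v : (Fin 1 → ℂ) × ℂ) :
    fderiv ℂ (fun q : (Fin 1 → ℂ) × ℂ => g q.1 q.2) 0 v =
      fderiv ℂ (scalarG g) 0 (v.1 0, v.2) := by
  let e : ((Fin 1 → ℂ) × ℂ) →L[ℂ] ℂ × ℂ :=
    (ContinuousLinearMap.proj (R := ℂ) (φ := fun _ : Fin 1 => ℂ) 0).prodMap (.id ℂ ℂ)
  have hcomp : (fun q : (Fin 1 → ℂ) × ℂ => g q.1 q.2) = scalarG g ∘ e :=
    funext fun q => congrArg (fun z => g z q.2) (const_apply_zero q.1).symm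
  have hderiv := HasFDerivAt.comp (0 : (Fin 1 → ℂ) × ℂ) (g := scalarG g) (f := e)
    hg.hasFDerivAt e.hasFDerivAt
  rw [hcomp, hderiv.fderiv]
  rfl

theorem pd_ne_zero (hf : AnalyticAt ℂ (scalarG fun z w => f z w 0) 0)
    (hr : analyticOrderAt (fun z => scalarG (fun z w => f z w 0) (z, 0)) 0 = (1 : ℕ)) :
    pd 0 (fun z => f z 0 0) 0 ≠ 0 := by
  rw [pd_zero_eq_deriv]
  exact deriv_ne_zero_of_analyticOrderAt_eq_one (analyticAt_prodMk_zero hf) hr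

theorem segreTransversal_of_hasLexOrder (hg : AnalyticAt ℂ (scalarG g) 0)
    (hlex : HasLexOrder (scalarG g) 1 0) : SegreTransversal g := by
  have hderiv := hg.differentiableAt.hasFDerivAt.comp_hasDerivAt (0 : ℂ)
    (hasDerivAt_const (0 : ℂ) (0 : ℂ) |>.prodMk (hasDerivAt_id (0 : ℂ)))
  exact hderiv.deriv.trans_ne (hlex.fderiv_snd (m := 0)).apply_zero_ne_zero

theorem det_jacFull_ne_zero (hf : AnalyticAt ℂ (scalarG fun z w => f z w 0) 0)
    (hg : AnalyticAt ℂ (scalarG g) 0)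
    (hr : analyticOrderAt (fun z => scalarG (fun z w => f z w 0) (z, 0)) 0 = (1 : ℕ))
    (hlex : HasLexOrder (scalarG g) 1 0) : (jacFull f g 0).det ≠ 0 := by
  have hdf (k : Fin 2) := fderiv_apply_eq_fderiv_scalarG hf.differentiableAt (dirCT 1 k)
  have hdg (k : Fin 2) := fderiv_apply_eq_fderiv_scalarG hg.differentiableAt (dirCT 1 k)
  have hfz : fderiv ℂ (scalarG fun z w => f z w 0) 0 (1, 0) ≠ 0 := by
    have := deriv_ne_zero_of_analyticOrderAt_eq_one (analyticAt_prodMk_zero hf) hr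
    rwa [← fderiv_apply_one_eq_deriv, fderiv_comp_prodMk_zero hf.differentiableAt] at this
  have hgz : fderiv ℂ (scalarG g) 0 (1, 0) = 0 := by
    refine (fderiv_comp_prodMk_zero hg.differentiableAt 1).symm.trans ?_
    rw [EventuallyEq.fderiv_eq (f := fun _ => 0) (hlex.eventually_prodMk_zero_eq_zero one_ne_zero)]
    simp
  have hgw : fderiv ℂ (scalarG g) 0 (0, 1) ≠ 0 := (hlex.fderiv_snd (m := 0)).apply_zero_ne_zero
  have hfrow (k : Fin 2) : jacFull f g 0 0 k =
      fderiv ℂ (fun q : (Fin 1 → ℂ) × ℂ => f q.1 q.2 0) 0 (dirCT 1 k) := rfl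
  have hgrow (k : Fin 2) : jacFull f g 0 1 k =
      fderiv ℂ (fun q : (Fin 1 → ℂ) × ℂ => g q.1 q.2) 0 (dirCT 1 k) := rfl
  rw [Matrix.det_fin_two, hfrow, hfrow, hgrow, hgrow, hdf, hdf, hdg, hdg]
  simp [dirCT, hgz, hfz, hgw]

end Maps

end Translation

/-- Theorem 1.6, final part: in `ℂ²`, with `M'` of finite type at `0` and `ℋ`
totally Segre nondegenerate at `0`, the maps `z ↦ f(z,0)` and `χ ↦ f̃(χ,0)` are not identically
zero and have the same order of vanishing at `0`; if moreover `Q' = Q`, then `ℋ` is a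
biholomorphism near `0`. -/
theorem statement6 (Q Q' : (Fin 1 → ℂ) → (Fin 1 → ℂ) → ℂ → ℂ)
    (hQ : IsRealNormalDF Q) (hQ' : IsRealNormalDF Q')
    (hM' : FiniteType Q')
    (f ft : (Fin 1 → ℂ) → ℂ → Fin 1 → ℂ) (g gt : (Fin 1 → ℂ) → ℂ → ℂ)
    (hH : IsHSPM Q Q' f g ft gt)
    (hnd : TotallySegreNondeg f ft) :
    (¬ ∀ᶠ z in 𝓝 (0 : Fin 1 → ℂ), f z 0 = 0) ∧
    (¬ ∀ᶠ χ in 𝓝 (0 : Fin 1 → ℂ), ft χ 0 = 0) ∧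
    vanishOrder (fun z => f z 0 0) = vanishOrder (fun χ => ft χ 0 0) ∧
    (Q' = Q →
      pd 0 (fun z => f z 0 0) 0 ≠ 0 ∧
      pd 0 (fun χ => ft χ 0 0) 0 ≠ 0 ∧
      deriv (fun w => g 0 w) 0 ≠ 0 ∧
      (jacFull f g 0).det ≠ 0 ∧ (jacFull ft gt 0).det ≠ 0) := by
  have h := hH.isSegreMap
  obtain ⟨r, hr⟩ := exists_analyticOrderAt_eq_of_jacz hnd.1
  obtain ⟨s, hs⟩ := exists_analyticOrderAt_eq_of_jacz hnd.2
  obtain ⟨rfl, -⟩ := h.exists_lexOrder_relations hQ.isRealGerm hQ'.isRealGerm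
    hM'.not_eventually_scalarQ hr hs
  refine ⟨not_eventually_eq_zero_of_analyticOrderAt hr,
    not_eventually_eq_zero_of_analyticOrderAt hs, ?_, ?_⟩
  · rw [vanishOrder_eq_of_analyticOrderAt (analyticAt_prodMk_zero h.analyticAt_f) hr,
      vanishOrder_eq_of_analyticOrderAt (analyticAt_prodMk_zero h.analyticAt_ft) hs]
  · rintro rfl
    obtain ⟨rfl, hg, hgt⟩ :=
      h.lexOrder_eq_of_self hQ.isRealGerm hM'.not_eventually_scalarQ hr hs
    exact ⟨pd_ne_zero h.analyticAt_f hr, pd_ne_zero h.analyticAt_ft hs,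
      segreTransversal_of_hasLexOrder h.analyticAt_g hg,
      det_jacFull_ne_zero h.analyticAt_f h.analyticAt_g hr hg,
      det_jacFull_ne_zero h.analyticAt_ft h.analyticAt_gt hs hgt⟩

end HSPMpaper
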